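/- arXiv:2512.24874 — 2 statements merged into one kernel-verified Lean document; each statement's English description precedes it below -/
import Mathlib

section
/- Let d, f, s ∈ ℂ with f ≠ 0 and s² = 1 − d·f, set x = (1 − s)/f, and let M₁ = [[1,0,0],[d,−1,f],[0,0,1]]. Let P be the 5×5 complex matrix whose first column is (1, x, x², x³, x⁴)ᵀ and whose j-th column is the standard basis vector e_j for 2 ≤ j ≤ 5. Then P is invertible and, with A₁ = [[1,0,0,0,0],[0,−1,f,0,0],[0,0,1,0,0],[0,0,0,1,0],[0,0,0,0,1]], A₂ = [[1,0,0,0,0],[0,1,0,0,0],[0,d,−1,f,0],[0,0,0,1,0],[0,0,0,0,1]], A₃ = [[1,0,0,0,0],[0,1,0,0,0],[0,0,1,0,0],[0,0,d,−1,f],[0,0,0,0,1]], one has T_i(M₁)·P = P·A_i for i = 1,2,3. In particular, in the basis {(1,x,x²,x³,x⁴)ᵀ, e₂, e₃, e₄, e₅} the representation τ₁ of T₄ is block-triangular and has the 3×3 composition factor τ₁⁽¹⁾ given by τ₁⁽¹⁾(s₁) = [[−1,f,0],[0,1,0],[0,0,1]], τ₁⁽¹⁾(s₂) = [[1,0,0],[d,−1,f],[0,0,1]],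 τ₁⁽¹⁾(s₃) = [[1,0,0],[0,1,0],[0,d,−1]]. -/
/-!
Writing `s = 1 - f x`, the relation `s² = 1 - d f` becomes `d - x + f x² = x`, since `f ≠ 0`.
Multiplied by `x ^ (i-1)`, this says that row `i` (indexed from `0`), the only nontrivial row of `T_i(M₁)`, fixes the geometric
vector `(1, x, x², x³, x⁴)ᵀ`. The remaining columns of `T_i(M₁) * P = P * A_i` concern standard basis
vectors only. Invertibility of `P` holds because `P` is lower triangular with unit diagonal.
-/

open Matrix

/-- `TLoc n i M` is the `(n+1)×(n+1)` matrix `I_{i-1} ⊕ M ⊕ I_{n-i-1}`: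
the 3×3 block `M` occupies rows and columns `i-1, i, i+1` (with `i` 1-indexed,
`1 ≤ i ≤ n-1`), and all other diagonal entries are `1`.
In particular `TLoc 4 1 M = M ⊕ I₂`, `TLoc 4 3 M = I₂ ⊕ M` (5×5), and
`TLoc 3 1 M = M ⊕ I₁`, `TLoc 3 2 M = I₁ ⊕ M` (4×4). -/
def TLoc (n i : ℕ) (M : Matrix (Fin 3) (Fin 3) ℂ) : Matrix (Fin (n+1)) (Fin (n+1)) ℂ :=
  Matrix.of fun j k =>
    if hj : i - 1 ≤ (j : ℕ) ∧ (j : ℕ) ≤ i + 1 then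
      if hk : i - 1 ≤ (k : ℕ) ∧ (k : ℕ) ≤ i + 1 then
        M ⟨(j : ℕ) - (i - 1), by omega⟩ ⟨(k : ℕ) - (i - 1), by omega⟩
      else 0
    else if j = k then 1 else 0

/-- The embedding `Fin 3 → Fin 5` sending `j` to `j+1` (rows/columns 1,2,3 of a 5×5 matrix). -/
def emb : Fin 3 → Fin 5 := fun j => ⟨(j : ℕ) + 1, by omega⟩

/-- The relation which, multiplied by `x ^ (i-1)`, makes row `i` of `T_i(M₁)` fix the vector `(x ^ k)`. -/
lemma quadratic_relation {d f s x : ℂ} (hf : f ≠ 0) (hs : s ^ 2 = 1 - d * f)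
    (hx : x = (1 - s) / f) : d - x + f * x ^ 2 = x := by
  have hsx : s = 1 - f * x := by
    rw [hx]
    field_simp
    ring
  subst hsx
  apply mul_left_cancel₀ hf
  linear_combination hs

/-- change of basis for `τ₁` on `T₄`. With `x = (1-s)/f`, the matrix `P`
whose first column is `(1,x,x²,x³,x⁴)ᵀ` and whose other columns are standard basis
vectors is invertible and satisfies `T_i(M₁)·P = P·A_i` for the given `A₁, A₂, A₃`;
in particular `τ₁` is block-triangular in this basis and its 3×3 composition factor
`τ₁⁽¹⁾` (the middle 3×3 blocks of the `A_i`) is as displayed. -/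
theorem stmt4 (d f s x : ℂ) (hf : f ≠ 0) (hs : s ^ 2 = 1 - d * f) (hx : x = (1 - s) / f)
    (P : Matrix (Fin 5) (Fin 5) ℂ)
    (hP : P = Matrix.of fun a b : Fin 5 =>
      if b = 0 then x ^ (a : ℕ) else if a = b then 1 else 0)
    (A₁ A₂ A₃ : Matrix (Fin 5) (Fin 5) ℂ)
    (hA₁ : A₁ = !![1, 0, 0, 0, 0; 0, -1, f, 0, 0; 0, 0, 1, 0, 0; 0, 0, 0, 1, 0; 0, 0, 0, 0, 1])
    (hA₂ : A₂ = !![1, 0, 0, 0, 0; 0, 1, 0, 0, 0; 0, d, -1, f, 0; 0, 0, 0, 1, 0; 0, 0, 0, 0, 1])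
    (hA₃ : A₃ = !![1, 0, 0, 0, 0; 0, 1, 0, 0, 0; 0, 0, 1, 0, 0; 0, 0, d, -1, f; 0, 0, 0, 0, 1]) :
    IsUnit P ∧
    TLoc 4 1 !![1, 0, 0; d, -1, f; 0, 0, 1] * P = P * A₁ ∧
    TLoc 4 2 !![1, 0, 0; d, -1, f; 0, 0, 1] * P = P * A₂ ∧
    TLoc 4 3 !![1, 0, 0; d, -1, f; 0, 0, 1] * P = P * A₃ ∧
    A₁.submatrix emb emb = !![-1, f, 0; 0, 1, 0; 0, 0, 1] ∧
    A₂.submatrix emb emb = !![1, 0, 0; d, -1, f; 0, 0, 1] ∧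
    A₃.submatrix emb emb = !![1, 0, 0; 0, 1, 0; 0, d, -1] := by
  have key := quadratic_relation hf hs hx
  clear hx hs
  have hdet : P.det = 1 := by
    have hT : P.BlockTriangular OrderDual.toDual := by
      intro a b hab
      have hlt : a < b := hab
      have hb : b ≠ 0 := Fin.ne_zero_of_lt hlt
      simp [hP, hb, hlt.ne]
    rw [Matrix.det_of_isLowerTriangular P hT]
    simp [hP]
  refine ⟨(Matrix.isUnit_iff_isUnit_det P).2 (by simp [hdet]), ?_, ?_, ?_, ?_, ?_, ?_⟩
  · subst hP hA₁
    ext a b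
    fin_cases a <;> fin_cases b <;> simp [TLoc, Matrix.mul_apply, Fin.sum_univ_five]
    linear_combination key
  · subst hP hA₂
    ext a b
    fin_cases a <;> fin_cases b <;> simp [TLoc, Matrix.mul_apply, Fin.sum_univ_five]
    linear_combination x * key
  · subst hP hA₃
    ext a b
    fin_cases a <;> fin_cases b <;> simp [TLoc, Matrix.mul_apply, Fin.sum_univ_five]
    linear_combination x ^ 2 * key
  all_goals
    subst hA₁ hA₂ hA₃
    ext a b
    fin_cases a <;> fin_cases b <;> rfl
end

section
/- Let n ≥ 4, let h, p ∈ ℂ be nonzero, and set M = [[1,0,0],[0,1,0],[0,h,−1]], N = [[1,0,0],[0,0,p],[0,1/p,0]] (the representation δ₁ of VT_n with e = 1). There exists a group homomorphism δ : VT_n → GL_{n+1}(ℂ) with δ(s_i) = T_i(M) and δ(ρ_i) = T_i(N) for all 1 ≤ i ≤ n−1, and every such homomorphism is not injective; indeed (s₁ρ₂)⁴ is a nontrivial element of VT_n lying in the kernel of δ. -/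
/-!
On a column vector `v`, the matrix `T_i(M)` changes only the coordinate `v_{i+1}`, to
`h v_i - v_{i+1}`, and `T_i(N)` sends `(v_i, v_{i+1})` to `(p v_{i+1}, p⁻¹ v_i)` (coordinates
numbered from `0`, with `i` the 1-indexed generator). With these formulas each defining relator of
`VTₙ` and the identity `(T_1(M) T_2(N))⁴ = 1` are checked coordinate by coordinate.

For the nontriviality of `(s₁ρ₂)⁴`, send both `s_i` and `ρ_i` to the transposition `(i i+1)`.
All relations hold, and `s₁ρ₂` goes to a 3-cycle, whose fourth power is itself.
-/

open Matrix

/-- Generators of the (virtual/welded) twin group on `n` strands: `Sum.inl i` is the twin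
generator `s_{i+1}` and `Sum.inr i` is the generator `ρ_{i+1}` (`i : Fin (n-1)`,
0-indexed; the 1-indexed generator `s_i` corresponds to `Sum.inl ⟨i-1,_⟩`). -/
abbrev TwinGen (n : ℕ) := Fin (n - 1) ⊕ Fin (n - 1)

/-- The free-group letter for the twin generator `s_{i+1}`. -/
def sF (n : ℕ) (i : Fin (n - 1)) : FreeGroup (TwinGen n) := FreeGroup.of (Sum.inl i)

/-- The free-group letter for the generator `ρ_{i+1}`. -/
def rF (n : ℕ) (i : Fin (n - 1)) : FreeGroup (TwinGen n) := FreeGroup.of (Sum.inr i)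

/-- The defining relators of the virtual twin group `VTₙ`:
`s_i² = 1`, `ρ_i² = 1`, `s_is_j = s_js_i`, `ρ_iρ_j = ρ_jρ_i`, `s_iρ_j = ρ_js_i` for
`|i-j| ≥ 2`, `ρ_iρ_{i+1}ρ_i = ρ_{i+1}ρ_iρ_{i+1}` and `ρ_iρ_{i+1}s_i = s_{i+1}ρ_iρ_{i+1}`. -/
def vtRels (n : ℕ) : Set (FreeGroup (TwinGen n)) :=
  {w | (∃ i, w = sF n i * sF n i) ∨
       (∃ i, w = rF n i * rF n i) ∨
       (∃ i j : Fin (n - 1), ((i : ℕ) + 2 ≤ (j : ℕ) ∨ (j : ℕ) + 2 ≤ (i : ℕ)) ∧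
          w = sF n i * sF n j * (sF n i)⁻¹ * (sF n j)⁻¹) ∨
       (∃ i j : Fin (n - 1), ((i : ℕ) + 2 ≤ (j : ℕ) ∨ (j : ℕ) + 2 ≤ (i : ℕ)) ∧
          w = rF n i * rF n j * (rF n i)⁻¹ * (rF n j)⁻¹) ∨
       (∃ i j : Fin (n - 1), ((i : ℕ) + 2 ≤ (j : ℕ) ∨ (j : ℕ) + 2 ≤ (i : ℕ)) ∧
          w = sF n i * rF n j * (sF n i)⁻¹ * (rF n j)⁻¹) ∨
       (∃ i j : Fin (n - 1), (j : ℕ) = (i : ℕ) + 1 ∧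
          w = rF n i * rF n j * rF n i * (rF n j * rF n i * rF n j)⁻¹) ∨
       (∃ i j : Fin (n - 1), (j : ℕ) = (i : ℕ) + 1 ∧
          w = rF n i * rF n j * sF n i * (sF n j * rF n i * rF n j)⁻¹)}

/-- The virtual twin group `VTₙ`, as a presented group. -/
abbrev VTGroup (n : ℕ) := PresentedGroup (vtRels n)

/-- The generator `s_{i+1}` of `VTₙ` (0-indexed `i : Fin (n-1)`). -/
def sV (n : ℕ) (i : Fin (n - 1)) : VTGroup n := PresentedGroup.of (Sum.inl i)

/-- The generator `ρ_{i+1}` of `VTₙ` (0-indexed `i : Fin (n-1)`). -/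
def rV (n : ℕ) (i : Fin (n - 1)) : VTGroup n := PresentedGroup.of (Sum.inr i)

/-- A row of `T_{i+1}(M)`, as a combination of standard basis vectors. -/
lemma TLoc_M_row (n : ℕ) (i : Fin (n - 1)) (h : ℂ) (k : Fin (n + 1)) :
    TLoc n ((i : ℕ) + 1) !![1, 0, 0; 0, 1, 0; 0, h, -1] k =
      if (k : ℕ) = i + 2 then
        Pi.single (⟨i + 1, by omega⟩ : Fin (n + 1)) h + Pi.single k (-1)
      else Pi.single k 1 := by
  obtain ⟨i, hi⟩ := i
  obtain ⟨k, hk⟩ := k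
  ext ⟨j, hj⟩
  by_cases hk' : i ≤ k ∧ k ≤ i + 2
  · obtain ⟨c, rfl⟩ := Nat.exists_eq_add_of_le hk'.1
    have hc : c < 3 := by omega
    by_cases hj' : i ≤ j ∧ j ≤ i + 2
    · obtain ⟨d, rfl⟩ := Nat.exists_eq_add_of_le hj'.1
      have hd : d < 3 := by omega
      interval_cases c <;> interval_cases d <;> simp [TLoc]
    · interval_cases c <;> simp [TLoc, Pi.single_apply] <;> grind
  · simp [TLoc]
    grind

/-- A row of `T_{i+1}(N)`, as a multiple of a standard basis vector. -/
lemma TLoc_N_row (n : ℕ) (i : Fin (n - 1)) (p : ℂ) (k : Fin (n + 1)) :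
    TLoc n ((i : ℕ) + 1) !![1, 0, 0; 0, 0, p; 0, 1 / p, 0] k =
      if (k : ℕ) = i + 1 then Pi.single (⟨i + 2, by omega⟩ : Fin (n + 1)) p
      else if (k : ℕ) = i + 2 then Pi.single (⟨i + 1, by omega⟩ : Fin (n + 1)) p⁻¹
      else Pi.single k 1 := by
  obtain ⟨i, hi⟩ := i
  obtain ⟨k, hk⟩ := k
  ext ⟨j, hj⟩
  by_cases hk' : i ≤ k ∧ k ≤ i + 2
  · obtain ⟨c, rfl⟩ := Nat.exists_eq_add_of_le hk'.1
    have hc : c < 3 := by omega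
    by_cases hj' : i ≤ j ∧ j ≤ i + 2
    · obtain ⟨d, rfl⟩ := Nat.exists_eq_add_of_le hj'.1
      have hd : d < 3 := by omega
      interval_cases c <;> interval_cases d <;> simp [TLoc]
    · interval_cases c <;> simp [TLoc, Pi.single_apply] <;> grind
  · simp [TLoc]
    grind

lemma TLoc_M_mulVec (n : ℕ) (i : Fin (n - 1)) (h : ℂ) (v : Fin (n + 1) → ℂ) (k : Fin (n + 1)) :
    (TLoc n ((i : ℕ) + 1) !![1, 0, 0; 0, 1, 0; 0, h, -1] *ᵥ v) k =
      if (k : ℕ) = i + 2 then h * v ⟨i + 1, by omega⟩ - v k else v k := by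
  rw [Matrix.mulVec, TLoc_M_row]
  split_ifs
  · rw [add_dotProduct, single_dotProduct, single_dotProduct]; ring
  · simp

lemma TLoc_N_mulVec (n : ℕ) (i : Fin (n - 1)) (p : ℂ) (v : Fin (n + 1) → ℂ) (k : Fin (n + 1)) :
    (TLoc n ((i : ℕ) + 1) !![1, 0, 0; 0, 0, p; 0, 1 / p, 0] *ᵥ v) k =
      if (k : ℕ) = i + 1 then p * v ⟨i + 2, by omega⟩
      else if (k : ℕ) = i + 2 then p⁻¹ * v ⟨i + 1, by omega⟩
      else v k := by
  rw [Matrix.mulVec, TLoc_N_row]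
  split_ifs <;> simp

section Relations

variable (n : ℕ) (h p : ℂ)

/-- The matrix `T_{i+1}(M)`, for the 0-indexed generator `i`. -/
def matS (i : Fin (n - 1)) : Matrix (Fin (n + 1)) (Fin (n + 1)) ℂ :=
  TLoc n ((i : ℕ) + 1) !![1, 0, 0; 0, 1, 0; 0, h, -1]

/-- The matrix `T_{i+1}(N)`, for the 0-indexed generator `i`. -/
noncomputable def matR (i : Fin (n - 1)) : Matrix (Fin (n + 1)) (Fin (n + 1)) ℂ :=
  TLoc n ((i : ℕ) + 1) !![1, 0, 0; 0, 0, p; 0, 1 / p, 0]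

lemma matS_mulVec (i : Fin (n - 1)) (v : Fin (n + 1) → ℂ) :
    matS n h i *ᵥ v = fun k : Fin (n + 1) =>
      if (k : ℕ) = i + 2 then h * v ⟨i + 1, by omega⟩ - v k else v k :=
  funext fun k => TLoc_M_mulVec n i h v k

lemma matR_mulVec (i : Fin (n - 1)) (v : Fin (n + 1) → ℂ) :
    matR n p i *ᵥ v = fun k : Fin (n + 1) =>
      if (k : ℕ) = i + 1 then p * v ⟨i + 2, by omega⟩
      else if (k : ℕ) = i + 2 then p⁻¹ * v ⟨i + 1, by omega⟩
      else v k :=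
  funext fun k => TLoc_N_mulVec n i p v k

lemma matS_sq (i : Fin (n - 1)) : matS n h i * matS n h i = 1 := by
  refine Matrix.ext_of_mulVec_single fun j => ?_
  generalize (Pi.single j 1 : Fin (n + 1) → ℂ) = v
  simp only [← Matrix.mulVec_mulVec, matS_mulVec, Matrix.one_mulVec]
  ext k
  grind

lemma matS_comm {i j : Fin (n - 1)} (hij : (i : ℕ) + 2 ≤ j ∨ (j : ℕ) + 2 ≤ i) :
    matS n h i * matS n h j = matS n h j * matS n h i := by
  refine Matrix.ext_of_mulVec_single fun j => ?_
  generalize (Pi.single j 1 : Fin (n + 1) → ℂ) = v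
  simp only [← Matrix.mulVec_mulVec, matS_mulVec]
  ext k
  grind

variable {p}

lemma matR_sq (hp : p ≠ 0) (i : Fin (n - 1)) : matR n p i * matR n p i = 1 := by
  refine Matrix.ext_of_mulVec_single fun j => ?_
  generalize (Pi.single j 1 : Fin (n + 1) → ℂ) = v
  simp only [← Matrix.mulVec_mulVec, matR_mulVec, Matrix.one_mulVec]
  ext k
  grind

lemma matR_comm {i j : Fin (n - 1)} (hij : (i : ℕ) + 2 ≤ j ∨ (j : ℕ) + 2 ≤ i) :
    matR n p i * matR n p j = matR n p j * matR n p i := by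
  refine Matrix.ext_of_mulVec_single fun j => ?_
  generalize (Pi.single j 1 : Fin (n + 1) → ℂ) = v
  simp only [← Matrix.mulVec_mulVec, matR_mulVec]
  ext k
  grind

lemma matS_matR_comm {i j : Fin (n - 1)} (hij : (i : ℕ) + 2 ≤ j ∨ (j : ℕ) + 2 ≤ i) :
    matS n h i * matR n p j = matR n p j * matS n h i := by
  refine Matrix.ext_of_mulVec_single fun j => ?_
  generalize (Pi.single j 1 : Fin (n + 1) → ℂ) = v
  simp only [← Matrix.mulVec_mulVec, matS_mulVec, matR_mulVec]
  ext k
  grind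

lemma matR_braid {i j : Fin (n - 1)} (hij : (j : ℕ) = i + 1) :
    matR n p i * matR n p j * matR n p i = matR n p j * matR n p i * matR n p j := by
  refine Matrix.ext_of_mulVec_single fun j => ?_
  generalize (Pi.single j 1 : Fin (n + 1) → ℂ) = v
  simp only [← Matrix.mulVec_mulVec, matR_mulVec]
  ext k
  grind

lemma matR_matS_braid {i j : Fin (n - 1)} (hij : (j : ℕ) = i + 1) :
    matR n p i * matR n p j * matS n h i = matS n h j * matR n p i * matR n p j := by
  refine Matrix.ext_of_mulVec_single fun j => ?_
  generalize (Pi.single j 1 : Fin (n + 1) → ℂ) = v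
  simp only [← Matrix.mulVec_mulVec, matS_mulVec, matR_mulVec]
  ext k
  grind

/-- On the coordinates `(a, b, c) = (v_{i+1}, v_{i+2}, v_{i+3})`, with `i` 0-indexed, the product
acts as `(a, b, c) ↦ (a, h a - p c, b / p)`, whose square is
`(a, b, c) ↦ (a, h a - b, h a / p - c)`, an involution. -/
lemma matS_mul_matR_pow_four (hp : p ≠ 0) {i j : Fin (n - 1)} (hij : (j : ℕ) = i + 1) :
    (matS n h i * matR n p j) ^ 4 = 1 := by
  have key (v : Fin (n + 1) → ℂ) : (matS n h i * matR n p j) *ᵥ v = fun k : Fin (n + 1) =>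
      if (k : ℕ) = i + 2 then h * v ⟨i + 1, by omega⟩ - p * v ⟨i + 3, by omega⟩
      else if (k : ℕ) = i + 3 then p⁻¹ * v ⟨i + 2, by omega⟩ else v k := by
    simp only [← Matrix.mulVec_mulVec, matS_mulVec, matR_mulVec]
    ext k
    grind
  have key2 (v : Fin (n + 1) → ℂ) : (matS n h i * matR n p j) ^ 2 *ᵥ v = fun k : Fin (n + 1) =>
      if (k : ℕ) = i + 2 then h * v ⟨i + 1, by omega⟩ - v k
      else if (k : ℕ) = i + 3 then p⁻¹ * h * v ⟨i + 1, by omega⟩ - v k else v k := by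
    simp only [pow_two, ← Matrix.mulVec_mulVec _ (matS n h i * _), key]
    ext k
    grind
  refine Matrix.ext_of_mulVec_single fun j => ?_
  generalize (Pi.single j 1 : Fin (n + 1) → ℂ) = v
  simp only [pow_mul _ 2 2, pow_two (_ ^ 2), show (4 : ℕ) = 2 * 2 from rfl,
    ← Matrix.mulVec_mulVec, key2, Matrix.one_mulVec]
  ext k
  grind

end Relations

/-- An assignment `S`, `R` of elements of a group to the generators `s_i`, `ρ_i` extends to
`VTₙ` as soon as it satisfies the defining relations. -/
lemma exists_hom_of_relations {G : Type*} [Group G] (n : ℕ) (S R : Fin (n - 1) → G)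
    (hS : ∀ i, S i * S i = 1) (hR : ∀ i, R i * R i = 1)
    (hSS : ∀ i j : Fin (n - 1), ((i : ℕ) + 2 ≤ j ∨ (j : ℕ) + 2 ≤ i) → S i * S j = S j * S i)
    (hRR : ∀ i j : Fin (n - 1), ((i : ℕ) + 2 ≤ j ∨ (j : ℕ) + 2 ≤ i) → R i * R j = R j * R i)
    (hSR : ∀ i j : Fin (n - 1), ((i : ℕ) + 2 ≤ j ∨ (j : ℕ) + 2 ≤ i) → S i * R j = R j * S i)
    (hb : ∀ i j : Fin (n - 1), (j : ℕ) = i + 1 → R i * R j * R i = R j * R i * R j)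
    (hm : ∀ i j : Fin (n - 1), (j : ℕ) = i + 1 → R i * R j * S i = S j * R i * R j) :
    ∃ f : VTGroup n →* G, (∀ i, f (sV n i) = S i) ∧ ∀ i, f (rV n i) = R i := by
  have hrel : ∀ w ∈ vtRels n, FreeGroup.lift (Sum.elim S R) w = 1 := by
    rintro w (⟨i, rfl⟩ | ⟨i, rfl⟩ | ⟨i, j, hij, rfl⟩ | ⟨i, j, hij, rfl⟩ | ⟨i, j, hij, rfl⟩ |
      ⟨i, j, hij, rfl⟩ | ⟨i, j, hij, rfl⟩) <;>
      simp only [sF, rF, map_mul, map_inv, FreeGroup.lift_apply_of, Sum.elim_inl, Sum.elim_inr]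
    · exact hS i
    · exact hR i
    · rw [hSS i j hij]; group
    · rw [hRR i j hij]; group
    · rw [hSR i j hij]; group
    · rw [hb i j hij, mul_inv_cancel]
    · rw [hm i j hij, mul_inv_cancel]
  exact ⟨PresentedGroup.toGroup hrel, fun i => PresentedGroup.toGroup.of hrel,
    fun i => PresentedGroup.toGroup.of hrel⟩

/-- Over `ℕ`, adjacent transpositions at distance at least two commute. -/
lemma swap_comm_of_far {i j : ℕ} (hij : i + 2 ≤ j ∨ j + 2 ≤ i) :
    Equiv.swap i (i + 1) * Equiv.swap j (j + 1) = Equiv.swap j (j + 1) * Equiv.swap i (i + 1) := by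
  ext k
  simp only [Equiv.Perm.mul_apply, Equiv.swap_apply_def]
  grind

lemma swap_braid {i j : ℕ} (hij : j = i + 1) :
    Equiv.swap i (i + 1) * Equiv.swap j (j + 1) * Equiv.swap i (i + 1) =
      Equiv.swap j (j + 1) * Equiv.swap i (i + 1) * Equiv.swap j (j + 1) := by
  subst hij
  ext k
  simp only [Equiv.Perm.mul_apply, Equiv.swap_apply_def]
  grind

lemma sV_mul_rV_pow_four_ne_one (n : ℕ) {i j : Fin (n - 1)} (hi : (i : ℕ) = 0)
    (hj : (j : ℕ) = 1) : (sV n i * rV n j) ^ 4 ≠ 1 := by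
  obtain ⟨f, hfs, hfr⟩ := exists_hom_of_relations n
    (fun i => Equiv.swap (i : ℕ) (i + 1)) (fun i => Equiv.swap (i : ℕ) (i + 1))
    (fun i => Equiv.swap_mul_self _ _) (fun i => Equiv.swap_mul_self _ _)
    (fun i j => swap_comm_of_far) (fun i j => swap_comm_of_far) (fun i j => swap_comm_of_far)
    (fun i j => swap_braid) (fun i j => swap_braid)
  intro hw
  have h0 := congrArg (fun σ : Equiv.Perm ℕ => σ 0) (congrArg f hw)
  simp only [map_pow, map_mul, hfs, hfr, hi, hj, map_one] at h0
  -- the 3-cycle `(0 1)(1 2)` sends `0 ↦ 1 ↦ 2 ↦ 0`, so its fourth power moves `0`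
  revert h0
  decide

/-- for `h, p ≠ 0` and the blocks `M = [[1,0,0],[0,1,0],[0,h,-1]]`,
`N = [[1,0,0],[0,0,p],[0,1/p,0]]` (the representation `δ₁` of `VTₙ` with `e = 1`), there
exists a homomorphism `δ : VTₙ → GL_{n+1}(ℂ)` with `δ(s_i) = T_i(M)`, `δ(ρ_i) = T_i(N)`,
and every such homomorphism is non-injective: `(s₁ρ₂)⁴` is a nontrivial element of `VTₙ`
lying in the kernel of `δ`. -/
theorem stmt15 (n : ℕ) (hn : 4 ≤ n) (h p : ℂ) (hh : h ≠ 0) (hp : p ≠ 0) :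
    (∃ δ : VTGroup n →* Matrix (Fin (n+1)) (Fin (n+1)) ℂ,
      (∀ i : Fin (n - 1), δ (sV n i) = TLoc n ((i : ℕ) + 1) !![1, 0, 0; 0, 1, 0; 0, h, -1]) ∧
      (∀ i : Fin (n - 1), δ (rV n i) = TLoc n ((i : ℕ) + 1) !![1, 0, 0; 0, 0, p; 0, 1 / p, 0])) ∧
    (sV n ⟨0, by omega⟩ * rV n ⟨1, by omega⟩) ^ 4 ≠ 1 ∧
    ∀ δ : VTGroup n →* Matrix (Fin (n+1)) (Fin (n+1)) ℂ,
      (∀ i : Fin (n - 1), δ (sV n i) = TLoc n ((i : ℕ) + 1) !![1, 0, 0; 0, 1, 0; 0, h, -1]) →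
      (∀ i : Fin (n - 1), δ (rV n i) = TLoc n ((i : ℕ) + 1) !![1, 0, 0; 0, 0, p; 0, 1 / p, 0]) →
      δ ((sV n ⟨0, by omega⟩ * rV n ⟨1, by omega⟩) ^ 4) = 1 ∧ ¬ Function.Injective δ := by
  refine ⟨?_, sV_mul_rV_pow_four_ne_one n rfl rfl, fun δ hs hr => ?_⟩
  · obtain ⟨f, hfs, hfr⟩ := exists_hom_of_relations n
      (fun i => (⟨matS n h i, matS n h i, matS_sq n h i, matS_sq n h i⟩ :
        (Matrix (Fin (n + 1)) (Fin (n + 1)) ℂ)ˣ))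
      (fun i => ⟨matR n p i, matR n p i, matR_sq n hp i, matR_sq n hp i⟩)
      (fun i => Units.ext (matS_sq n h i)) (fun i => Units.ext (matR_sq n hp i))
      (fun i j hij => Units.ext (matS_comm n h hij))
      (fun i j hij => Units.ext (matR_comm n hij))
      (fun i j hij => Units.ext (matS_matR_comm n h hij))
      (fun i j hij => Units.ext (matR_braid n hij))
      (fun i j hij => Units.ext (matR_matS_braid n h hij))
    exact ⟨(Units.coeHom _).comp f, fun i => congrArg Units.val (hfs i),
      fun i => congrArg Units.val (hfr i)⟩
  · have hker : δ ((sV n ⟨0, by omega⟩ * rV n ⟨1, by omega⟩) ^ 4) = 1 := by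
      rw [map_pow, map_mul, hs, hr]
      exact matS_mul_matR_pow_four n h hp (i := ⟨0, by omega⟩) (j := ⟨1, by omega⟩) rfl
    exact ⟨hker, fun hinj =>
      sV_mul_rV_pow_four_ne_one n rfl rfl (hinj (hker.trans (map_one δ).symm))⟩
end
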